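/- Let α and β be real numbers with 0 < α < 1 and 0 < β < 1, and let x be a complex number with Re(x) > 0 such that none of the six numbers (x+α)/2, (x−α−β+1)/2, (x+β)/2, (x−α+2)/2, (x+α+β+1)/2, (x−β+2)/2 is a nonpositive integer. Define, for m ≥ 0, q_m = (4m²+α−α²+β−β²−αβ)/2 + αβ(−1+α+β)/(2(2m−1)(2m+1)), and for m ≥ 1, p_m = −(2m−α−β)(2m−2+α+β)((2m−1)²−α²)((2m−1)²−β²)/(16(2m−1)²). Then the continued fraction (x²+q_0)/2 + K_{m=1}^∞(p_m/(x²+q_m)) converges to a nonzero value v, and Γ((x+α)/2)·Γ((x−α−β+1)/2)·Γ((x+β)/2) / [Γ((x−α+2)/2)·Γ((x+α+β+1)/2)·Γ((x−β+2)/2)] = 2/v. -/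

import Mathlib

open Filter

noncomputable def cfA (a b : ℕ → ℂ) : ℕ → ℂ
  | 0 => 1
  | 1 => b 0
  | n + 2 => b (n + 1) * cfA a b (n + 1) + a (n + 1) * cfA a b n

noncomputable def cfB (a b : ℕ → ℂ) : ℕ → ℂ
  | 0 => 0
  | 1 => 1
  | n + 2 => b (n + 1) * cfB a b (n + 1) + a (n + 1) * cfB a b n

/-- The continued fraction `b 0 + K_{n=1}^∞ (a n / b n)` converges to `v`. -/
def CFConvergesTo (a b : ℕ → ℂ) (v : ℂ) : Prop :=
  (∀ᶠ n in atTop, cfB a b n ≠ 0) ∧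
    Tendsto (fun n => cfA a b n / cfB a b n) atTop (nhds v)

/-- `p_m = −(2m−α−β)(2m−2+α+β)((2m−1)²−α²)((2m−1)²−β²)/(16(2m−1)²)` for `m ≥ 1`. -/
noncomputable def aSeq (α β : ℝ) : ℕ → ℂ := fun m =>
  -((2 * (m : ℂ) - α - β) * (2 * (m : ℂ) - 2 + α + β) *
      ((2 * (m : ℂ) - 1) ^ 2 - (α : ℂ) ^ 2) * ((2 * (m : ℂ) - 1) ^ 2 - (β : ℂ) ^ 2)) /
    (16 * (2 * (m : ℂ) - 1) ^ 2)

/-- `q_m = (4m²+α−α²+β−β²−αβ)/2 + αβ(−1+α+β)/(2(2m−1)(2m+1))`. -/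
noncomputable def qSeq (α β : ℝ) : ℕ → ℂ := fun m =>
  (4 * (m : ℂ) ^ 2 + α - (α : ℂ) ^ 2 + β - (β : ℂ) ^ 2 - (α : ℂ) * β) / 2 +
    (α : ℂ) * β * (-1 + α + β) / (2 * (2 * (m : ℂ) - 1) * (2 * (m : ℂ) + 1))

/-- Partial denominators: `b_0 = (x²+q_0)/2`, `b_m = x²+q_m` for `m ≥ 1`. -/
noncomputable def bSeq (α β : ℝ) (x : ℂ) : ℕ → ℂ := fun m =>
  if m = 0 then (x ^ 2 + qSeq α β 0) / 2 else x ^ 2 + qSeq α β m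

/-!
Written with the third parameter `γ = 1 - α - β`, the partial numerators and denominators are
symmetric in `α`, `β`, `γ`, and the Bauer–Muir transform replaces `(α, β, γ, x)` by
`(-α, -β, -γ, x + 1)`. A solution `y` of the three-term recurrence and its transform
`y (m + 1) - r m * y m`, each divided by its growth rate, satisfy a first-order system whose second
component relaxes towards the first one, so both quotients have the same limit. Hence the limits
`u`, `v` of the scaled numerators and denominators exist and do not both vanish, and the transform
turns `(u, v)` into `(v, u / lam)`. Iterating `2 * k` times moves `x` to `x + 2 * k` and multiplies
`u / v` by a product of explicit quotients of linear factors. For large `k` the continued fraction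
is dominated by its first term `(x + 2 * k) ^ 2 / 2 ∼ 2 * k ^ 2`, while Euler's limit formula for
`Γ` evaluates the product divided by `k ^ 2`. Comparing the two shows that the quotient of
`Γ`-values times `u` is `2 * v`.
-/

section ContinuedFraction

variable {a b y z : ℕ → ℂ}

/-- Solutions of the three-term recurrence satisfied by the canonical numerators and denominators
of `b 0 + K (a n / b n)`, indexed like `cfA` and `cfB`: the value at `m` belongs to the
approximant of order `m - 1`. -/
def IsRecurrenceSolution (a b y : ℕ → ℂ) : Prop :=
  ∀ m, y (m + 2) = b (m + 1) * y (m + 1) + a (m + 1) * y m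

lemma isRecurrenceSolution_cfA (a b : ℕ → ℂ) : IsRecurrenceSolution a b (cfA a b) := fun _ => rfl

lemma isRecurrenceSolution_cfB (a b : ℕ → ℂ) : IsRecurrenceSolution a b (cfB a b) := fun _ => rfl

lemma IsRecurrenceSolution.eq_add (hy : IsRecurrenceSolution a b y) (m : ℕ) :
    y m = y 0 * cfA a b m + (y 1 - b 0 * y 0) * cfB a b m := by
  induction m using Nat.twoStepInduction with
  | zero => simp [cfA, cfB]
  | one => simp only [cfA, cfB]; ring
  | more m ih ih' => rw [hy, ih, ih']; simp only [cfA, cfB]; ring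

lemma IsRecurrenceSolution.add_mul (hy : IsRecurrenceSolution a b y)
    (hz : IsRecurrenceSolution a b z) (p q : ℂ) :
    IsRecurrenceSolution a b (fun m => p * y m + q * z m) := fun m => by
  simp only [hy m, hz m]
  ring

lemma exists_isRecurrenceSolution_of_ne_zero (b : ℕ → ℂ) (ha : ∀ m, a (m + 1) ≠ 0) (M : ℕ)
    (s t : ℂ) : ∃ y, IsRecurrenceSolution a b y ∧ y M = s ∧ y (M + 1) = t := by
  induction M generalizing s t with
  | zero =>
    refine ⟨_, (isRecurrenceSolution_cfA a b).add_mul (isRecurrenceSolution_cfB a b) s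
      (t - s * b 0), ?_, ?_⟩
    · simp [cfA, cfB]
    · simp [cfA, cfB]
  | succ M ih =>
    obtain ⟨y, hy, hyM, hyM'⟩ := ih ((t - b (M + 1) * s) / a (M + 1)) s
    refine ⟨y, hy, hyM', ?_⟩
    rw [hy, hyM, hyM', mul_div_cancel₀ _ (ha M), add_sub_cancel]

lemma cfB_succ_eq_cfA (a b : ℕ → ℂ) (n : ℕ) :
    cfB a b (n + 1) = cfA (fun m => a (m + 1)) (fun m => b (m + 1)) n := by
  have h : IsRecurrenceSolution (fun m => a (m + 1)) (fun m => b (m + 1))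
      (fun m => cfB a b (m + 1)) := fun _ => rfl
  simpa [cfB] using h.eq_add n

lemma cfA_succ_eq_add (a b : ℕ → ℂ) (n : ℕ) :
    cfA a b (n + 1) = b 0 * cfA (fun m => a (m + 1)) (fun m => b (m + 1)) n +
      a 1 * cfB (fun m => a (m + 1)) (fun m => b (m + 1)) n := by
  have h : IsRecurrenceSolution (fun m => a (m + 1)) (fun m => b (m + 1))
      (fun m => cfA a b (m + 1)) := fun _ => rfl
  simpa [cfA, mul_comm (b 1)] using h.eq_add n

/-- A value region of Śleszyński–Pringsheim type: every approximant lies in the disc of radius `g 0`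
around `b 0`. -/
theorem norm_cfA_sub_le {g : ℕ → ℝ} (hg : ∀ m, 0 ≤ g m)
    (hab : ∀ m, ‖a (m + 1)‖ ≤ g m * (‖b (m + 1)‖ - g (m + 1))) (n : ℕ) :
    ‖cfA a b (n + 1) - b 0 * cfB a b (n + 1)‖ ≤ g 0 * ‖cfB a b (n + 1)‖ := by
  induction n generalizing a b g with
  | zero => simpa [cfA, cfB] using hg 0
  | succ n ih =>
    set A := cfA (fun m => a (m + 1)) (fun m => b (m + 1)) (n + 1)
    set B := cfB (fun m => a (m + 1)) (fun m => b (m + 1)) (n + 1)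
    have htail : ‖A - b 1 * B‖ ≤ g 1 * ‖B‖ := ih (fun m => hg (m + 1)) (fun m => hab (m + 1))
    have hA : (‖b 1‖ - g 1) * ‖B‖ ≤ ‖A‖ := by
      have := norm_sub_norm_le (b 1 * B) A
      rw [norm_mul, norm_sub_rev] at this
      linarith
    rw [cfB_succ_eq_cfA, cfA_succ_eq_add, add_sub_cancel_left, norm_mul]
    calc ‖a 1‖ * ‖B‖ ≤ g 0 * (‖b 1‖ - g 1) * ‖B‖ := by gcongr; exact hab 0
      _ ≤ g 0 * ‖A‖ := by rw [mul_assoc]; gcongr; exact hg 0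

/-- The sequences `d`, `r` and the constant `lam` exhibit the Bauer–Muir transform of the continued
fraction `b 0 + K (a n / b n)` with modifying factors `r`. The product `d m * r m` enters
symmetrically, so that the transform itself is described by exchanging `d` and `r`. -/
structure IsBauerMuir (a b d r : ℕ → ℂ) (lam : ℂ) : Prop where
  den_zero : b 0 = r 0
  den_succ (m : ℕ) : b (m + 1) = d m + r (m + 1)
  num_succ (m : ℕ) : a (m + 1) = lam - d m * r m

namespace IsBauerMuir

variable {b' d r : ℕ → ℂ} {lam : ℂ}

lemma sub_mul_succ (h : IsBauerMuir a b d r lam) (hy : IsRecurrenceSolution a b y) (m : ℕ) :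
    y (m + 2) - r (m + 1) * y (m + 1) = d m * (y (m + 1) - r m * y m) + lam * y m := by
  rw [hy, h.den_succ, h.num_succ]
  ring

lemma isRecurrenceSolution_transform (h : IsBauerMuir a b d r lam)
    (h' : IsBauerMuir a b' r d lam) (hy : IsRecurrenceSolution a b y) :
    IsRecurrenceSolution a b' (fun m => y (m + 1) - r m * y m) := fun m => by
  dsimp only
  rw [h.sub_mul_succ hy (m + 1), h'.den_succ, h'.num_succ, h.sub_mul_succ hy m]
  ring

lemma cfA_transform (h : IsBauerMuir a b d r lam) (h' : IsBauerMuir a b' r d lam) (m : ℕ) :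
    cfA a b' m = cfB a b (m + 1) - r m * cfB a b m := by
  have hsol := h.isRecurrenceSolution_transform h' (isRecurrenceSolution_cfB a b)
  simpa [cfB, h.den_succ, h'.den_zero] using (hsol.eq_add m).symm

lemma cfB_transform (h : IsBauerMuir a b d r lam) (h' : IsBauerMuir a b' r d lam) (m : ℕ) :
    lam * cfB a b' m = cfA a b (m + 1) - r m * cfA a b m := by
  have hsol := h.isRecurrenceSolution_transform h' (isRecurrenceSolution_cfA a b)
  have hzero : cfA a b 1 - r 0 * cfA a b 0 = 0 := by simp [cfA, h.den_zero]
  have hone : cfA a b 2 - r 1 * cfA a b 1 = lam := by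
    rw [h.sub_mul_succ (isRecurrenceSolution_cfA a b), hzero]
    simp [cfA]
  simpa [hzero, hone] using (hsol.eq_add m).symm

end IsBauerMuir

end ContinuedFraction

section PerturbedContraction

variable {E : Type*} [NormedAddCommGroup E] {θ κ η : ℕ → ℝ} {u z : ℕ → E} {c : E}

lemma tendsto_zero_of_le_one_sub_mul_add {w : ℕ → ℝ} (hw : ∀ m, 0 ≤ w m) (hθ : ∀ m, 0 ≤ θ m)
    (hθsum : ¬Summable θ) (hη : Summable η) (h : ∀ m, w (m + 1) ≤ (1 - θ m) * w m + η m) :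
    Tendsto w atTop (nhds 0) := by
  set V : ℕ → ℝ := fun m => w m - ∑ j ∈ Finset.range m, η j with hV
  have hsum := hη.hasSum.tendsto_sum_nat
  have hdecr (m : ℕ) : θ m * w m ≤ V m - V (m + 1) := by
    simp only [hV, Finset.sum_range_succ]
    linarith [h m]
  have hanti : Antitone V :=
    antitone_nat_of_succ_le fun m => by linarith [hdecr m, mul_nonneg (hθ m) (hw m)]
  obtain ⟨C, hC⟩ := hsum.bddAbove_range
  have hVC (m : ℕ) : -C ≤ V m := by linarith [hw m, hC ⟨m, rfl⟩]
  have hlim : Tendsto w atTop (nhds ((⨅ m, V m) + ∑' j, η j)) := by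
    refine ((tendsto_atTop_ciInf hanti ⟨-C, by rintro _ ⟨m, rfl⟩; exact hVC m⟩).add hsum).congr ?_
    simp [hV]
  set L := (⨅ m, V m) + ∑' j, η j
  have hL : 0 ≤ L := ge_of_tendsto' hlim hw
  rcases hL.eq_or_lt with hL | hL
  · rwa [← hL] at hlim
  obtain ⟨M, hM⟩ := eventually_atTop.1 (hlim.eventually (lt_mem_nhds (half_lt_self hL)))
  refine absurd ((summable_nat_add_iff M).1 ?_) hθsum
  refine summable_of_sum_range_le (c := (V M + C) / (L / 2)) (fun m => hθ _) fun n => ?_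
  rw [le_div_iff₀ (half_pos hL), Finset.sum_mul]
  calc ∑ j ∈ Finset.range n, θ (j + M) * (L / 2)
      ≤ ∑ j ∈ Finset.range n, (V (j + M) - V (j + 1 + M)) := by
        refine Finset.sum_le_sum fun j _ => ?_
        rw [add_right_comm]
        exact (mul_le_mul_of_nonneg_left (hM _ (Nat.le_add_left M j)).le (hθ _)).trans (hdecr _)
    _ = V M - V (n + M) := by
        rw [Finset.sum_range_sub' (fun j => V (j + M)), zero_add]
    _ ≤ V M + C := by linarith [hVC (n + M)]

/-- Pairs of sequences obeying a linear system close to `u (m + 1) = u m`,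
`z (m + 1) = (1 - θ m) z m`: the error of the `m`-th step is at most `κ m` times the size of the
pair. -/
structure IsPerturbedContraction (θ κ : ℕ → ℝ) (u z : ℕ → E) : Prop where
  norm_sub_le (m : ℕ) : ‖u (m + 1) - u m‖ ≤ κ m * (‖u m‖ + ‖z m‖)
  norm_succ_le (m : ℕ) : ‖z (m + 1)‖ ≤ (1 - θ m) * ‖z m‖ + κ m * (‖u m‖ + ‖z m‖)

namespace IsPerturbedContraction

lemma norm_add_norm_le (h : IsPerturbedContraction θ κ u z) (hθ : ∀ m, 0 ≤ θ m)
    (hκ : ∀ m, 0 ≤ κ m) (hκsum : Summable κ) {M m : ℕ} (hm : M ≤ m) :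
    ‖u m‖ + ‖z m‖ ≤ (‖u M‖ + ‖z M‖) * Real.exp (∑' j, 2 * κ j) := by
  have hstep (m : ℕ) : ‖u (m + 1)‖ + ‖z (m + 1)‖ ≤ (1 + 2 * κ m) * (‖u m‖ + ‖z m‖) + 0 := by
    have := norm_le_norm_add_norm_sub' (u (m + 1)) (u m)
    linarith [h.norm_sub_le m, h.norm_succ_le m, mul_nonneg (hθ m) (norm_nonneg (z m))]
  have hκ' (m : ℕ) : 0 ≤ 2 * κ m := mul_nonneg zero_le_two (hκ m)
  have hgronwall := discrete_gronwall (u := fun m => ‖u m‖ + ‖z m‖) (b := fun _ => 0) (n₀ := M)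
    (by positivity) (fun m _ => hstep m) (fun m _ => hκ' m) (fun _ _ => le_rfl) hm
  rw [Finset.sum_const_zero, add_zero] at hgronwall
  refine hgronwall.trans ?_
  gcongr
  exact (hκsum.mul_left 2).sum_le_tsum _ fun j _ => hκ' j

variable (h : IsPerturbedContraction θ κ u z) (hθ : ∀ m, 0 ≤ θ m) (hκ : ∀ m, 0 ≤ κ m)
  (hκsum : Summable κ)
include h hθ hκ hκsum

lemma dist_succ_le {M m : ℕ} (hm : M ≤ m) :
    dist (u m) (u (m + 1)) ≤ κ m * ((‖u M‖ + ‖z M‖) * Real.exp (∑' j, 2 * κ j)) := by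
  rw [dist_eq_norm, norm_sub_rev]
  exact (h.norm_sub_le m).trans
    (mul_le_mul_of_nonneg_left (h.norm_add_norm_le hθ hκ hκsum hm) (hκ m))

theorem exists_tendsto [CompleteSpace E] : ∃ c, Tendsto u atTop (nhds c) :=
  cauchySeq_tendsto_of_complete <| cauchySeq_of_dist_le_of_summable _
    (fun m => h.dist_succ_le hθ hκ hκsum (Nat.zero_le m)) (hκsum.mul_right _)

theorem tendsto_zero (hθsum : ¬Summable θ) : Tendsto z atTop (nhds 0) := by
  set K := (‖u 0‖ + ‖z 0‖) * Real.exp (∑' j, 2 * κ j)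
  have hz (m : ℕ) : ‖z (m + 1)‖ ≤ (1 - θ m) * ‖z m‖ + κ m * K := by
    refine (h.norm_succ_le m).trans ?_
    have := hκ m
    gcongr
    exact h.norm_add_norm_le hθ hκ hκsum (Nat.zero_le m)
  exact tendsto_zero_iff_norm_tendsto_zero.2 <| tendsto_zero_of_le_one_sub_mul_add
    (fun m => norm_nonneg (z m)) hθ hθsum (hκsum.mul_right K) hz

theorem limit_ne_zero (hc : Tendsto u atTop (nhds c)) {M : ℕ}
    (hM : (∑' j, κ (j + M)) * Real.exp (∑' j, 2 * κ j) < 1) (hz : z M = 0) (hu : u M ≠ 0) :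
    c ≠ 0 := by
  rintro rfl
  have hdist (m : ℕ) := h.dist_succ_le hθ hκ hκsum (Nat.le_add_left M m)
  simp only [add_right_comm _ M 1] at hdist
  have hle := dist_le_tsum_of_dist_le_of_tendsto₀ (f := fun m => u (m + M)) _ hdist
    (((summable_nat_add_iff M).2 hκsum).mul_right _) ((tendsto_add_atTop_iff_nat M).2 hc)
  rw [zero_add, dist_zero_right, tsum_mul_right, hz, norm_zero, add_zero] at hle
  refine hle.not_gt ?_
  calc (∑' j, κ (j + M)) * (‖u M‖ * Real.exp (∑' j, 2 * κ j))
      = (∑' j, κ (j + M)) * Real.exp (∑' j, 2 * κ j) * ‖u M‖ := by ring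
    _ < ‖u M‖ := mul_lt_of_lt_one_left (norm_pos_iff.2 hu) hM

end IsPerturbedContraction

lemma exists_tsum_nat_add_mul_lt_one (κ : ℕ → ℝ) (K : ℝ) : ∃ M, (∑' j, κ (j + M)) * K < 1 := by
  have h := (tendsto_sum_nat_add κ).mul_const K
  rw [zero_mul] at h
  exact (h.eventually (gt_mem_nhds zero_lt_one)).exists

end PerturbedContraction

section RelaxationSystem

lemma norm_one_sub_le (t : ℂ) : ‖1 - t‖ ≤ 1 - t.re + ‖t‖ ^ 2 / 2 := by
  have hsq : ‖1 - t‖ ^ 2 = 1 - 2 * t.re + ‖t‖ ^ 2 := by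
    simp only [Complex.sq_norm, Complex.normSq_apply, Complex.sub_re, Complex.sub_im,
      Complex.one_re, Complex.one_im]
    ring
  nlinarith [sq_nonneg (‖1 - t‖ - 1)]

/-- Coefficients of a perturbation of the linear system `u (m + 1) = u m`,
`w (m + 1) = rate m * u m + (1 - rate m) * w m`, in which `w` relaxes towards the constant `u`.
The errors are the perturbations of the coefficients of `u` and `w` in the first equation and of
`w` in the second one. -/
structure RelaxationSystem where
  rate : ℕ → ℂ
  err₁ : ℕ → ℂ
  err₂ : ℕ → ℂ
  err₃ : ℕ → ℂ

namespace RelaxationSystem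

/-- The pair `u`, `w` satisfies both equations of the system. -/
structure IsSolution (S : RelaxationSystem) (u w : ℕ → ℂ) : Prop where
  fst_succ (m : ℕ) : u (m + 1) = (1 + S.err₁ m) * u m + S.err₂ m * w m
  snd_succ (m : ℕ) : w (m + 1) = S.rate m * u m + (1 - S.rate m + S.err₃ m) * w m

/-- The conditions under which all solutions converge to the line `u = w`: the relaxation is not
summable, the errors are. -/
structure IsConvergent (S : RelaxationSystem) : Prop where
  re_rate_nonneg (m : ℕ) : 0 ≤ (S.rate m).re
  not_summable_re_rate : ¬Summable fun m => (S.rate m).re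
  summable_sq_norm_rate : Summable fun m => ‖S.rate m‖ ^ 2
  summable_norm_err₁ : Summable fun m => ‖S.err₁ m‖
  summable_norm_err₂ : Summable fun m => ‖S.err₂ m‖
  summable_norm_err₃ : Summable fun m => ‖S.err₃ m‖

/-- The bound on the relative error of one step for the pair `(u, w - u)`. -/
noncomputable def stepError (S : RelaxationSystem) (m : ℕ) : ℝ :=
  ‖S.err₁ m‖ + ‖S.err₂ m‖ + ‖S.err₃ m‖ + ‖S.rate m‖ ^ 2 / 2

variable {S : RelaxationSystem} {u w : ℕ → ℂ}

lemma stepError_nonneg (S : RelaxationSystem) (m : ℕ) : 0 ≤ S.stepError m := by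
  unfold stepError
  positivity

lemma IsConvergent.summable_stepError (hS : S.IsConvergent) : Summable S.stepError :=
  ((hS.summable_norm_err₁.add hS.summable_norm_err₂).add hS.summable_norm_err₃).add
    (hS.summable_sq_norm_rate.div_const 2)

lemma IsSolution.norm_sub_le (h : S.IsSolution u w) (m : ℕ) :
    ‖u (m + 1) - u m‖ ≤ S.stepError m * (‖u m‖ + ‖w m - u m‖) := by
  have hu : ‖u m‖ ≤ ‖u m‖ + ‖w m - u m‖ := le_add_of_nonneg_right (norm_nonneg _)
  have hw : ‖w m‖ ≤ ‖u m‖ + ‖w m - u m‖ := norm_le_norm_add_norm_sub' _ _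
  have hdiff : u (m + 1) - u m = S.err₁ m * u m + S.err₂ m * w m := by rw [h.fst_succ]; ring
  calc ‖u (m + 1) - u m‖ ≤ ‖S.err₁ m‖ * ‖u m‖ + ‖S.err₂ m‖ * ‖w m‖ := by
        rw [hdiff]
        exact norm_add_le_of_le (norm_mul_le _ _) (norm_mul_le _ _)
    _ ≤ (‖S.err₁ m‖ + ‖S.err₂ m‖) * (‖u m‖ + ‖w m - u m‖) := by rw [add_mul]; gcongr
    _ ≤ S.stepError m * (‖u m‖ + ‖w m - u m‖) := by
        have : ‖S.err₁ m‖ + ‖S.err₂ m‖ ≤ S.stepError m := by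
          rw [stepError, add_assoc (_ + _)]
          exact le_add_of_nonneg_right (by positivity)
        gcongr

lemma IsSolution.norm_succ_le (h : S.IsSolution u w) (m : ℕ) :
    ‖w (m + 1) - u (m + 1)‖ ≤ (1 - (S.rate m).re) * ‖w m - u m‖ +
      S.stepError m * (‖u m‖ + ‖w m - u m‖) := by
  set z := w m - u m
  have hu : ‖u m‖ ≤ ‖u m‖ + ‖z‖ := le_add_of_nonneg_right (norm_nonneg _)
  have hw : ‖w m‖ ≤ ‖u m‖ + ‖z‖ := norm_le_norm_add_norm_sub' _ _
  have hz : ‖z‖ ≤ ‖u m‖ + ‖z‖ := le_add_of_nonneg_left (norm_nonneg _)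
  have hdiff : w (m + 1) - u (m + 1) =
      (1 - S.rate m) * z + (S.err₃ m * w m - S.err₁ m * u m - S.err₂ m * w m) := by
    rw [h.fst_succ, h.snd_succ]
    ring
  calc ‖w (m + 1) - u (m + 1)‖
      ≤ ‖1 - S.rate m‖ * ‖z‖ +
        (‖S.err₃ m‖ * ‖w m‖ + ‖S.err₁ m‖ * ‖u m‖ + ‖S.err₂ m‖ * ‖w m‖) := by
        rw [hdiff]
        refine norm_add_le_of_le (norm_mul_le _ _) (norm_sub_le_of_le (norm_sub_le_of_le ?_ ?_) ?_)
        <;> exact norm_mul_le _ _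
    _ ≤ (1 - (S.rate m).re) * ‖z‖ + (‖S.rate m‖ ^ 2 / 2 * ‖z‖ +
        (‖S.err₃ m‖ * ‖w m‖ + ‖S.err₁ m‖ * ‖u m‖ + ‖S.err₂ m‖ * ‖w m‖)) := by
        rw [← add_assoc (_ * _) (_ * _), ← add_mul]
        gcongr
        exact norm_one_sub_le _
    _ ≤ (1 - (S.rate m).re) * ‖z‖ + (‖S.rate m‖ ^ 2 / 2 * (‖u m‖ + ‖z‖) +
        (‖S.err₃ m‖ * (‖u m‖ + ‖z‖) + ‖S.err₁ m‖ * (‖u m‖ + ‖z‖) +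
          ‖S.err₂ m‖ * (‖u m‖ + ‖z‖))) := by gcongr
    _ = (1 - (S.rate m).re) * ‖z‖ + S.stepError m * (‖u m‖ + ‖z‖) := by
        rw [stepError]
        ring

lemma IsSolution.isPerturbedContraction (h : S.IsSolution u w) :
    IsPerturbedContraction (fun m => (S.rate m).re) S.stepError u (fun m => w m - u m) where
  norm_sub_le := h.norm_sub_le
  norm_succ_le := h.norm_succ_le

theorem IsConvergent.exists_tendsto (hS : S.IsConvergent) (h : S.IsSolution u w) :
    ∃ c, Tendsto u atTop (nhds c) ∧ Tendsto w atTop (nhds c) := by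
  obtain ⟨c, hc⟩ := h.isPerturbedContraction.exists_tendsto hS.re_rate_nonneg
    S.stepError_nonneg hS.summable_stepError
  have hz := h.isPerturbedContraction.tendsto_zero hS.re_rate_nonneg S.stepError_nonneg
    hS.summable_stepError hS.not_summable_re_rate
  exact ⟨c, hc, by simpa using hc.add hz⟩

theorem IsConvergent.exists_limit_ne_zero (hS : S.IsConvergent) :
    ∃ M, ∀ u w c, S.IsSolution u w → w M = u M → u M ≠ 0 → Tendsto u atTop (nhds c) → c ≠ 0 := by
  obtain ⟨M, hM⟩ := exists_tsum_nat_add_mul_lt_one S.stepError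
    (Real.exp (∑' j, 2 * S.stepError j))
  exact ⟨M, fun u w c h hwu hu hc => h.isPerturbedContraction.limit_ne_zero hS.re_rate_nonneg
    S.stepError_nonneg hS.summable_stepError hc hM (sub_eq_zero.2 hwu) hu⟩

end RelaxationSystem

end RelaxationSystem

section ModifiedAsymptotics

lemma natCast_add_re_pos {s : ℂ} (hs : 0 < s.re) (m : ℕ) : 0 < ((m : ℂ) + s).re := by
  rw [Complex.add_re, Complex.natCast_re]
  positivity

lemma add_one_re_pos {s : ℂ} (hs : 0 < s.re) : 0 < (s + 1).re := by
  simpa only [add_comm, Nat.cast_one] using natCast_add_re_pos hs 1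

lemma natCast_add_ne_zero {s : ℂ} (hs : 0 < s.re) (m : ℕ) : (m : ℂ) + s ≠ 0 :=
  Complex.ne_zero_of_re_pos (natCast_add_re_pos hs m)

lemma natCast_mul_two_add_one_ne_zero (m : ℕ) : (m : ℂ) * 2 + 1 ≠ 0 := by
  exact_mod_cast (m * 2).succ_ne_zero

lemma summable_norm_div_natCast_add_mul {s t : ℂ} (hs : 0 < s.re) (ht : 0 < t.re) {f : ℕ → ℂ}
    {C : ℝ} (hf : ∀ m, ‖f m‖ ≤ C) : Summable fun m : ℕ => ‖f m / ((m + s) * (m + t))‖ := by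
  have hnorm {s : ℂ} (hs : 0 < s.re) (m : ℕ) : (m : ℝ) ≤ ‖(m : ℂ) + s‖ := by
    refine le_trans ?_ (Complex.re_le_norm _)
    simpa using hs.le
  refine Summable.of_norm_bounded_eventually_nat
    ((Real.summable_one_div_nat_pow.2 one_lt_two).mul_left C) ?_
  filter_upwards [eventually_gt_atTop 0] with m hm
  have : (0 : ℝ) < m := Nat.cast_pos.2 hm
  rw [norm_norm, norm_div, norm_mul, mul_one_div, sq]
  have := (norm_nonneg _).trans (hf m)
  gcongr
  exacts [hf m, hnorm hs m, hnorm ht m]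

/-- The growth rate of the solutions of the recurrence with parameter `x`, scaled by `2 ^ x * Γ(x)`
so that the limits for `x` and `x + 1` match without further constants. -/
noncomputable def solutionScale (x : ℂ) (m : ℕ) : ℂ :=
  2 ^ x * Complex.Gamma x * Complex.Gamma (m + 1 / 2) * Complex.Gamma (m + x)

/-- The numerators and denominators, divided by their common growth rate, converge to `u` and `v`:
the value of the continued fraction is `u / v`, read in the projective line. -/
structure HasScaledLimits (a b : ℕ → ℂ) (x u v : ℂ) : Prop where
  num : Tendsto (fun m => cfA a b m / solutionScale x m) atTop (nhds u)
  den : Tendsto (fun m => cfB a b m / solutionScale x m) atTop (nhds v)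

variable {a b b' d r y : ℕ → ℂ} {x lam u v : ℂ} {C : ℝ}

lemma HasScaledLimits.norm_sub_le {g : ℕ → ℝ} (hg : ∀ m, 0 ≤ g m)
    (hab : ∀ m, ‖a (m + 1)‖ ≤ g m * (‖b (m + 1)‖ - g (m + 1))) (h : HasScaledLimits a b x u v) :
    ‖u - b 0 * v‖ ≤ g 0 * ‖v‖ := by
  refine le_of_tendsto_of_tendsto (h.num.sub (h.den.const_mul (b 0))).norm
    (h.den.norm.const_mul (g 0)) ?_
  filter_upwards [eventually_gt_atTop 0] with m hm
  obtain ⟨n, rfl⟩ := Nat.exists_eq_succ_of_ne_zero hm.ne'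
  rw [mul_div_assoc', ← sub_div, norm_div, norm_div, mul_div_assoc']
  gcongr
  exact norm_cfA_sub_le hg hab n

variable (hx : 0 < x.re)
include hx

lemma solutionScale_ne_zero (m : ℕ) : solutionScale x m ≠ 0 := by
  have hhalf := natCast_add_re_pos (s := 1 / 2) (by norm_num) m
  refine mul_ne_zero (mul_ne_zero (mul_ne_zero ?_ ?_) ?_) ?_
  · exact Complex.cpow_ne_zero_iff.2 (Or.inl two_ne_zero)
  all_goals apply Complex.Gamma_ne_zero_of_re_pos
  exacts [hx, hhalf, natCast_add_re_pos hx m]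

lemma solutionScale_succ (m : ℕ) :
    solutionScale x (m + 1) = (m + 1 / 2) * (m + x) * solutionScale x m := by
  have hhalf : (m : ℂ) + 1 / 2 ≠ 0 := natCast_add_ne_zero (by norm_num) m
  rw [solutionScale, Nat.cast_succ, add_right_comm _ 1, add_right_comm _ 1,
    Complex.Gamma_add_one _ hhalf, Complex.Gamma_add_one _ (natCast_add_ne_zero hx m),
    solutionScale]
  ring

lemma solutionScale_add_one (m : ℕ) :
    solutionScale (x + 1) m = 2 * x * (m + x) * solutionScale x m := by
  have hx0 : x ≠ 0 := Complex.ne_zero_of_re_pos hx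
  rw [solutionScale, ← add_assoc, Complex.Gamma_add_one _ hx0,
    Complex.Gamma_add_one _ (natCast_add_ne_zero hx m), Complex.cpow_add _ _ two_ne_zero,
    Complex.cpow_one, solutionScale]
  ring

namespace IsBauerMuir

/-- The system satisfied by `y m / solutionScale x m` and by the same quotient for the Bauer–Muir
transform of `y` and the parameter `x + 1`. -/
noncomputable def relaxationSystem (d r : ℕ → ℂ) (lam x : ℂ) : RelaxationSystem where
  rate m := 2 * x / (m + 1 / 2)
  err₁ m := (d m - (m + 1 / 2) * (m + (x + 1))) / ((m + 1 / 2) * (m + (x + 1)))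
  err₂ m := lam / (2 * x * (m + x)) / ((m + 1 / 2) * (m + (x + 1)))
  err₃ m := (r m - (m + 1 / 2) * (m - x) + x * (2 * x - 1)) / ((m + 1 / 2) * (m + x))

lemma isSolution_relaxationSystem (h : IsBauerMuir a b d r lam)
    (hy : IsRecurrenceSolution a b y) : (relaxationSystem d r lam x).IsSolution
      (fun m => (y (m + 1) - r m * y m) / solutionScale (x + 1) m)
      (fun m => y m / solutionScale x m) := by
  have hx0 : x ≠ 0 := Complex.ne_zero_of_re_pos hx
  have hx1 : 0 < (x + 1).re := add_one_re_pos hx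
  refine ⟨fun m => ?_, fun m => ?_⟩
  · have hodd := natCast_mul_two_add_one_ne_zero m
    have hmx := natCast_add_ne_zero hx m
    have hmx1 := natCast_add_ne_zero hx1 m
    have hD := solutionScale_ne_zero hx m
    rw [h.sub_mul_succ hy, solutionScale_succ hx1, solutionScale_add_one hx]
    simp only [relaxationSystem]
    field_simp
    ring
  · have hodd := natCast_mul_two_add_one_ne_zero m
    have hmx := natCast_add_ne_zero hx m
    have hD := solutionScale_ne_zero hx m
    rw [solutionScale_succ hx, solutionScale_add_one hx]
    simp only [relaxationSystem]
    field_simp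
    ring

lemma isConvergent_relaxationSystem (lam : ℂ)
    (hd : ∀ m : ℕ, ‖d m - (m + 1 / 2) * (m + (x + 1))‖ ≤ C)
    (hr : ∀ m : ℕ, ‖r m - (m + 1 / 2) * (m - x)‖ ≤ C) :
    (relaxationSystem d r lam x).IsConvergent := by
  have hx1 : 0 < (x + 1).re := add_one_re_pos hx
  have hhalf : 0 < (1 / 2 : ℂ).re := by norm_num
  have hre (m : ℕ) : (2 * x / (m + 1 / 2)).re = 2 * x.re / (m + 1 / 2) := by
    have : (m : ℂ) + 1 / 2 = ((m + 1 / 2 : ℝ) : ℂ) := by push_cast; ring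
    rw [this, Complex.div_ofReal_re]
    simp
  constructor
  · intro m
    simp only [relaxationSystem, hre]
    positivity
  · simp only [relaxationSystem, hre]
    refine fun hsum => lt_irrefl (1 : ℝ) ((Real.summable_one_div_nat_add_rpow (1 / 2) 1).1 ?_)
    refine (hsum.div_const (2 * x.re)).congr fun m => ?_
    have hpos : (0 : ℝ) < m + 1 / 2 := by positivity
    rw [Real.rpow_one, abs_of_pos hpos]
    field_simp
  · have := summable_norm_div_natCast_add_mul hhalf hhalf (f := fun _ => (2 * x) ^ 2) (C := _)
      (fun _ => le_rfl)
    simpa [relaxationSystem, ← sq, ← div_pow] using this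
  · exact summable_norm_div_natCast_add_mul hhalf hx1 hd
  · refine summable_norm_div_natCast_add_mul hhalf hx1 (C := ‖lam‖ / (‖2 * x‖ * x.re)) fun m => ?_
    have hmx : x.re ≤ ‖(m : ℂ) + x‖ := le_trans (by simp) (Complex.re_le_norm _)
    have hx0 : 0 < ‖2 * x‖ := norm_pos_iff.2 (by simp [Complex.ne_zero_of_re_pos hx])
    rw [norm_div, norm_mul]
    gcongr
  · refine summable_norm_div_natCast_add_mul hhalf hx (C := C + ‖x * (2 * x - 1)‖) fun m => ?_
    exact norm_add_le_of_le (hr m) le_rfl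

theorem exists_tendsto (h : IsBauerMuir a b d r lam)
    (hd : ∀ m : ℕ, ‖d m - (m + 1 / 2) * (m + (x + 1))‖ ≤ C)
    (hr : ∀ m : ℕ, ‖r m - (m + 1 / 2) * (m - x)‖ ≤ C) (hy : IsRecurrenceSolution a b y) :
    ∃ c, Tendsto (fun m => (y (m + 1) - r m * y m) / solutionScale (x + 1) m) atTop (nhds c) ∧
      Tendsto (fun m => y m / solutionScale x m) atTop (nhds c) :=
  (isConvergent_relaxationSystem hx lam hd hr).exists_tendsto
    (h.isSolution_relaxationSystem hx hy)

theorem exists_tendsto_ne_zero (h : IsBauerMuir a b d r lam) (ha : ∀ m, a (m + 1) ≠ 0)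
    (hd : ∀ m : ℕ, ‖d m - (m + 1 / 2) * (m + (x + 1))‖ ≤ C)
    (hr : ∀ m : ℕ, ‖r m - (m + 1 / 2) * (m - x)‖ ≤ C) :
    ∃ y c, IsRecurrenceSolution a b y ∧
      Tendsto (fun m => y m / solutionScale x m) atTop (nhds c) ∧ c ≠ 0 := by
  obtain ⟨M, hM⟩ := (isConvergent_relaxationSystem hx lam hd hr).exists_limit_ne_zero
  obtain ⟨y, hy, hyM, hyM'⟩ := exists_isRecurrenceSolution_of_ne_zero b ha M (solutionScale x M)
    (r M * solutionScale x M + solutionScale (x + 1) M)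
  obtain ⟨c, hfst, hsnd⟩ := h.exists_tendsto hx hd hr hy
  have hx1 : 0 < (x + 1).re := add_one_re_pos hx
  have hu : (y (M + 1) - r M * y M) / solutionScale (x + 1) M = 1 := by
    rw [hyM', hyM, add_sub_cancel_left, div_self (solutionScale_ne_zero hx1 M)]
  have hw : y M / solutionScale x M = 1 := by rw [hyM, div_self (solutionScale_ne_zero hx M)]
  exact ⟨y, c, hy, hsnd, hM _ _ c (h.isSolution_relaxationSystem hx hy) (hw.trans hu.symm)
    (hu.trans_ne one_ne_zero) hfst⟩

end IsBauerMuir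

lemma HasScaledLimits.cfConvergesTo (h : HasScaledLimits a b x u v) (hv : v ≠ 0) :
    CFConvergesTo a b (u / v) := by
  refine ⟨?_, (h.num.div h.den hv).congr fun m => ?_⟩
  · filter_upwards [h.den.eventually_ne hv] with m hm hB
    simp [hB] at hm
  · exact div_div_div_cancel_right₀ (solutionScale_ne_zero hx m) _ _

namespace IsBauerMuir

theorem exists_hasScaledLimits (h : IsBauerMuir a b d r lam) (ha : ∀ m, a (m + 1) ≠ 0)
    (hd : ∀ m : ℕ, ‖d m - (m + 1 / 2) * (m + (x + 1))‖ ≤ C)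
    (hr : ∀ m : ℕ, ‖r m - (m + 1 / 2) * (m - x)‖ ≤ C) :
    ∃ u v, HasScaledLimits a b x u v ∧ (u ≠ 0 ∨ v ≠ 0) := by
  obtain ⟨u, -, hu⟩ := h.exists_tendsto hx hd hr (isRecurrenceSolution_cfA a b)
  obtain ⟨v, -, hv⟩ := h.exists_tendsto hx hd hr (isRecurrenceSolution_cfB a b)
  obtain ⟨y, c, hy, hc, hc0⟩ := h.exists_tendsto_ne_zero hx ha hd hr
  refine ⟨u, v, ⟨hu, hv⟩, or_iff_not_imp_left.2 fun hu0 hv0 => hc0 ?_⟩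
  have hcomb := (hu.const_mul (y 0)).add (hv.const_mul (y 1 - b 0 * y 0))
  rw [not_not.1 hu0, hv0, mul_zero, mul_zero, add_zero] at hcomb
  refine tendsto_nhds_unique hc (hcomb.congr fun m => ?_)
  rw [hy.eq_add m]
  ring

theorem hasScaledLimits_transform (h : IsBauerMuir a b d r lam) (h' : IsBauerMuir a b' r d lam)
    (hlam : lam ≠ 0) (hd : ∀ m : ℕ, ‖d m - (m + 1 / 2) * (m + (x + 1))‖ ≤ C)
    (hr : ∀ m : ℕ, ‖r m - (m + 1 / 2) * (m - x)‖ ≤ C) (huv : HasScaledLimits a b x u v) :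
    HasScaledLimits a b' (x + 1) v (u / lam) := by
  obtain ⟨u', hfst, hsnd⟩ := h.exists_tendsto hx hd hr (isRecurrenceSolution_cfA a b)
  obtain ⟨v', hfst', hsnd'⟩ := h.exists_tendsto hx hd hr (isRecurrenceSolution_cfB a b)
  rw [tendsto_nhds_unique hsnd huv.num] at hfst
  rw [tendsto_nhds_unique hsnd' huv.den] at hfst'
  simp only [← h.cfA_transform h'] at hfst'
  simp only [← h.cfB_transform h'] at hfst
  refine ⟨hfst', (hfst.div_const lam).congr fun m => ?_⟩
  field_simp

end IsBauerMuir

end ModifiedAsymptotics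

section Parameters

variable {α β γ x u v : ℂ}

/-- The partial numerators `p_m`, written symmetrically in three parameters: those of `aSeq α β`
have parameters `α`, `1 - α - β`, `β`. -/
noncomputable def partialNum (α β γ : ℂ) (m : ℕ) : ℂ :=
  -(((2 * (m : ℂ) - 1) ^ 2 - α ^ 2) * ((2 * (m : ℂ) - 1) ^ 2 - β ^ 2) *
      ((2 * (m : ℂ) - 1) ^ 2 - γ ^ 2)) / (16 * (2 * (m : ℂ) - 1) ^ 2)

/-- The numbers `q_m`, written symmetrically in three parameters. -/
noncomputable def partialShift (α β γ : ℂ) (m : ℕ) : ℂ :=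
  (4 * (m : ℂ) ^ 2 + (α * β + β * γ + γ * α)) / 2 -
    α * β * γ / (2 * (2 * (m : ℂ) - 1) * (2 * (m : ℂ) + 1))

/-- The partial denominators: `(x ^ 2 + q_0) / 2` and `x ^ 2 + q_m` for `1 ≤ m`. -/
noncomputable def partialDen (α β γ x : ℂ) (m : ℕ) : ℂ :=
  if m = 0 then (x ^ 2 + partialShift α β γ 0) / 2 else x ^ 2 + partialShift α β γ m

/-- The Bauer–Muir modifying factors. Those of the inverse transform arise from
`(α, β, γ, x) ↦ (-α, -β, -γ, -1 - x)`. -/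
noncomputable def modFactor (α β γ x : ℂ) (m : ℕ) : ℂ :=
  (m + 1 / 2) * (m - x) +
    (α * β + β * γ + γ * α + 2 * x * (x + 1) + α * β * γ / (2 * m + 1)) / 4

/-- The constant `lam` of the Bauer–Muir transform with factors `modFactor α β γ x`. -/
noncomputable def bauerMuirConst (α β γ x : ℂ) : ℂ :=
  ((α * β + β * γ + γ * α + 2 * x * (x + 1)) ^ 2 + 2 * (1 + 2 * x) * (α * β * γ) -
    ((α * β) ^ 2 + (β * γ) ^ 2 + (γ * α) ^ 2)) / 16

lemma partialNum_neg (α β γ : ℂ) : partialNum (-α) (-β) (-γ) = partialNum α β γ := by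
  funext m
  simp only [partialNum, neg_sq]

lemma partialDen_neg (α β γ x : ℂ) : partialDen α β γ (-x) = partialDen α β γ x := by
  funext m
  simp only [partialDen, neg_sq]

lemma bauerMuirConst_neg (α β γ x : ℂ) :
    bauerMuirConst (-α) (-β) (-γ) (-1 - x) = bauerMuirConst α β γ x := by
  simp only [bauerMuirConst]
  ring

lemma bauerMuirConst_add_two_mul (h : α + β + γ = 1) (x j : ℂ) :
    bauerMuirConst α β γ (x + 2 * j) =
      2 * (x + 2 * j + 1) * (((x + α) / 2 + j) * ((x + β) / 2 + j) * ((x + γ) / 2 + j)) := by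
  obtain rfl : γ = 1 - α - β := by linear_combination h
  simp only [bauerMuirConst]
  ring

lemma bauerMuirConst_neg_add_two_mul (h : α + β + γ = 1) (x j : ℂ) :
    bauerMuirConst (-α) (-β) (-γ) (x + 2 * j + 1) =
      2 * (x + 2 * j + 1) *
        (((x - α + 2) / 2 + j) * ((x - β + 2) / 2 + j) * ((x - γ + 2) / 2 + j)) := by
  obtain rfl : γ = 1 - α - β := by linear_combination h
  simp only [bauerMuirConst]
  ring

theorem isBauerMuir_partialNum (h : (α + β + γ) ^ 2 = 1) (x : ℂ) :
    IsBauerMuir (partialNum α β γ) (partialDen α β γ x) (modFactor (-α) (-β) (-γ) (-1 - x))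
      (modFactor α β γ x) (bauerMuirConst α β γ x) where
  den_zero := by
    simp only [partialDen, partialShift, modFactor, if_true]
    norm_num
    ring
  den_succ m := by
    have hodd := natCast_mul_two_add_one_ne_zero m
    have hodd' := natCast_mul_two_add_one_ne_zero (m + 1)
    simp only [partialDen, partialShift, modFactor, m.succ_ne_zero, if_false]
    push_cast at hodd' ⊢
    have e : 2 * ((m : ℂ) + 1) - 1 = m * 2 + 1 := by ring
    rw [e]
    field_simp
    ring
  num_succ m := by
    have hodd := natCast_mul_two_add_one_ne_zero m
    simp only [partialNum, modFactor, bauerMuirConst]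
    push_cast
    have e : 2 * ((m : ℂ) + 1) - 1 = m * 2 + 1 := by ring
    rw [e]
    field_simp
    linear_combination 64 * (m * 2 + 1) ^ 4 * h

theorem isBauerMuir_partialNum_swap (h : (α + β + γ) ^ 2 = 1) (x : ℂ) :
    IsBauerMuir (partialNum α β γ) (partialDen (-α) (-β) (-γ) (x + 1)) (modFactor α β γ x)
      (modFactor (-α) (-β) (-γ) (-1 - x)) (bauerMuirConst α β γ x) := by
  have hneg : (-α + -β + -γ) ^ 2 = 1 := by rw [← h]; ring
  have hden : partialDen (-α) (-β) (-γ) (-1 - x) = partialDen (-α) (-β) (-γ) (x + 1) := by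
    rw [← partialDen_neg, neg_sub, sub_neg_eq_add]
  simpa only [partialNum_neg, bauerMuirConst_neg, hden, neg_neg, sub_sub_cancel] using
    isBauerMuir_partialNum hneg (-1 - x)

lemma norm_div_natCast_le (e : ℂ) (n : ℕ) : ‖e / n‖ ≤ ‖e‖ := by
  rw [norm_div, Complex.norm_natCast]
  rcases n.eq_zero_or_pos with rfl | hn
  · simp
  · exact div_le_self (norm_nonneg e) (Nat.one_le_cast.2 hn)

lemma norm_modFactor_sub_le (α β γ x : ℂ) (m : ℕ) :
    ‖modFactor α β γ x m - (m + 1 / 2) * (m - x)‖ ≤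
      (‖α * β + β * γ + γ * α + 2 * x * (x + 1)‖ + ‖α * β * γ‖) / 4 := by
  rw [modFactor, add_sub_cancel_left, norm_div, RCLike.norm_ofNat]
  gcongr
  exact norm_add_le_of_le le_rfl (mod_cast norm_div_natCast_le _ (2 * m + 1))

lemma norm_modFactor_neg_sub_le (α β γ x : ℂ) (m : ℕ) :
    ‖modFactor (-α) (-β) (-γ) (-1 - x) m - (m + 1 / 2) * (m + (x + 1))‖ ≤
      (‖α * β + β * γ + γ * α + 2 * x * (x + 1)‖ + ‖α * β * γ‖) / 4 := by
  convert norm_modFactor_sub_le (-α) (-β) (-γ) (-1 - x) m using 2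
  · ring_nf
  · rw [← norm_neg (α * β * γ)]
    ring_nf

theorem exists_hasScaledLimits_partialNum (h : (α + β + γ) ^ 2 = 1)
    (ha : ∀ m, partialNum α β γ (m + 1) ≠ 0) (hx : 0 < x.re) :
    ∃ u v, HasScaledLimits (partialNum α β γ) (partialDen α β γ x) x u v ∧ (u ≠ 0 ∨ v ≠ 0) :=
  (isBauerMuir_partialNum h x).exists_hasScaledLimits hx ha (norm_modFactor_neg_sub_le α β γ x)
    (norm_modFactor_sub_le α β γ x)

namespace HasScaledLimits

theorem add_one (h : (α + β + γ) ^ 2 = 1) (hx : 0 < x.re)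
    (hlam : bauerMuirConst α β γ x ≠ 0)
    (huv : HasScaledLimits (partialNum α β γ) (partialDen α β γ x) x u v) :
    HasScaledLimits (partialNum (-α) (-β) (-γ)) (partialDen (-α) (-β) (-γ) (x + 1)) (x + 1)
      v (u / bauerMuirConst α β γ x) :=
  partialNum_neg α β γ ▸ (isBauerMuir_partialNum h x).hasScaledLimits_transform hx
    (isBauerMuir_partialNum_swap h x) hlam (norm_modFactor_neg_sub_le α β γ x)
    (norm_modFactor_sub_le α β γ x) huv

theorem add_two (h : (α + β + γ) ^ 2 = 1) (hx : 0 < x.re)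
    (hlam : bauerMuirConst α β γ x ≠ 0) (hlam' : bauerMuirConst (-α) (-β) (-γ) (x + 1) ≠ 0)
    (huv : HasScaledLimits (partialNum α β γ) (partialDen α β γ x) x u v) :
    HasScaledLimits (partialNum α β γ) (partialDen α β γ (x + 2)) (x + 2)
      (u / bauerMuirConst α β γ x) (v / bauerMuirConst (-α) (-β) (-γ) (x + 1)) := by
  have hneg : (-α + -β + -γ) ^ 2 = 1 := by rw [← h]; ring
  have := (huv.add_one h hx hlam).add_one hneg (add_one_re_pos hx) hlam'
  rwa [neg_neg, neg_neg, neg_neg, add_assoc, one_add_one_eq_two] at this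

theorem add_two_mul (h : (α + β + γ) ^ 2 = 1) (hx : 0 < x.re)
    (hlam : ∀ j : ℕ, bauerMuirConst α β γ (x + 2 * j) ≠ 0)
    (hlam' : ∀ j : ℕ, bauerMuirConst (-α) (-β) (-γ) (x + 2 * j + 1) ≠ 0)
    (huv : HasScaledLimits (partialNum α β γ) (partialDen α β γ x) x u v) (k : ℕ) :
    HasScaledLimits (partialNum α β γ) (partialDen α β γ (x + 2 * k)) (x + 2 * k)
      (u / ∏ j ∈ Finset.range k, bauerMuirConst α β γ (x + 2 * j))
      (v / ∏ j ∈ Finset.range k, bauerMuirConst (-α) (-β) (-γ) (x + 2 * j + 1)) := by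
  induction k with
  | zero => simpa using huv
  | succ k ih =>
    have hxk : 0 < (x + 2 * k).re := by
      simpa only [add_comm, Nat.cast_mul, Nat.cast_ofNat] using natCast_add_re_pos hx (2 * k)
    have := ih.add_two h hxk (hlam k) (hlam' k)
    rwa [div_div, div_div, ← Finset.prod_range_succ, ← Finset.prod_range_succ, add_assoc,
      ← mul_add_one, ← Nat.cast_succ] at this

end HasScaledLimits

end Parameters

section GammaProduct

lemma tendsto_prod_div_mul_cpow_Gamma_div (s : ℂ) {t : ℂ} (ht : ∀ n : ℕ, t ≠ -n) :
    Tendsto (fun n : ℕ => (∏ j ∈ Finset.range (n + 1), (t + j) / (s + j)) * (n : ℂ) ^ (s - t))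
      atTop (nhds (Complex.Gamma s / Complex.Gamma t)) := by
  refine ((Complex.GammaSeq_tendsto_Gamma s).div (Complex.GammaSeq_tendsto_Gamma t)
    (Complex.Gamma_ne_zero ht)).congr' ?_
  filter_upwards [eventually_ne_atTop 0] with n hn
  have hn' : (n : ℂ) ≠ 0 := Nat.cast_ne_zero.2 hn
  have hfact : ((n.factorial : ℕ) : ℂ) ≠ 0 := Nat.cast_ne_zero.2 n.factorial_ne_zero
  have hpow : (n : ℂ) ^ t ≠ 0 := by simp [Complex.cpow_eq_zero_iff, hn']
  rw [Pi.div_apply, Complex.GammaSeq, Complex.GammaSeq, Finset.prod_div_distrib,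
    Complex.cpow_sub _ _ hn']
  field_simp

lemma tendsto_prod_three_div_sq {s₁ s₂ s₃ t₁ t₂ t₃ : ℂ} (h₁ : ∀ n : ℕ, t₁ ≠ -n)
    (h₂ : ∀ n : ℕ, t₂ ≠ -n) (h₃ : ∀ n : ℕ, t₃ ≠ -n)
    (hst : s₁ + s₂ + s₃ + 2 = t₁ + t₂ + t₃) :
    Tendsto (fun n : ℕ => (∏ j ∈ Finset.range (n + 1),
        (t₁ + j) / (s₁ + j) * ((t₂ + j) / (s₂ + j)) * ((t₃ + j) / (s₃ + j))) / (n : ℂ) ^ 2)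
      atTop (nhds (Complex.Gamma s₁ * Complex.Gamma s₂ * Complex.Gamma s₃ /
        (Complex.Gamma t₁ * Complex.Gamma t₂ * Complex.Gamma t₃))) := by
  have hlim := ((tendsto_prod_div_mul_cpow_Gamma_div s₁ h₁).mul
    (tendsto_prod_div_mul_cpow_Gamma_div s₂ h₂)).mul
    (tendsto_prod_div_mul_cpow_Gamma_div s₃ h₃)
  rw [div_mul_div_comm, div_mul_div_comm] at hlim
  refine hlim.congr' ?_
  filter_upwards [eventually_ne_atTop 0] with n hn
  have hn' : (n : ℂ) ≠ 0 := Nat.cast_ne_zero.2 hn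
  have hpow : (n : ℂ) ^ (s₁ - t₁) * (n : ℂ) ^ (s₂ - t₂) * (n : ℂ) ^ (s₃ - t₃) =
      ((n : ℂ) ^ 2)⁻¹ := by
    rw [← Complex.cpow_add _ _ hn', ← Complex.cpow_add _ _ hn', ← Complex.cpow_ofNat,
      ← Complex.cpow_neg]
    congr 1
    linear_combination hst
  rw [Finset.prod_mul_distrib, Finset.prod_mul_distrib, div_eq_mul_inv, ← hpow]
  ring

end GammaProduct

section Dominance

variable {α β γ x : ℂ}

lemma add_mul_add_mul_add_le {N p q r : ℝ} (hN : 1 ≤ N) (hp : 0 ≤ p) (hq : 0 ≤ q) (hr : 0 ≤ r) :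
    (N + p) * (N + q) * (N + r) ≤ N ^ 2 * (N + (1 + p) * (1 + q) * (1 + r)) := by
  have hNN : N ≤ N ^ 2 := le_self_pow₀ hN two_ne_zero
  have hmiddle : N * (p * q + q * r + r * p) ≤ N ^ 2 * (p * q + q * r + r * p) := by gcongr
  have hlast : p * q * r ≤ N ^ 2 * (p * q * r) :=
    le_mul_of_one_le_left (by positivity) (hN.trans hNN)
  nlinarith [sq_nonneg N]

lemma norm_partialNum_le (α β γ : ℂ) (m : ℕ) :
    ‖partialNum α β γ (m + 1)‖ ≤ (2 * m + 1) ^ 2 *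
      ((2 * m + 1) ^ 2 + (1 + ‖α‖ ^ 2) * (1 + ‖β‖ ^ 2) * (1 + ‖γ‖ ^ 2)) / 16 := by
  set n : ℝ := 2 * m + 1 with hn
  have hcast : 2 * ((m + 1 : ℕ) : ℂ) - 1 = (n : ℂ) := by rw [hn]; push_cast; ring
  have hn1 : 1 ≤ n ^ 2 := one_le_pow₀ (by rw [hn]; linarith [m.cast_nonneg (α := ℝ)])
  have hfactor (z : ℂ) : ‖(n : ℂ) ^ 2 - z ^ 2‖ ≤ n ^ 2 + ‖z‖ ^ 2 :=
    (norm_sub_le _ _).trans_eq (by simp)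
  rw [partialNum, hcast, norm_div, norm_neg, norm_mul, norm_mul, norm_mul, norm_pow,
    Complex.norm_real, RCLike.norm_ofNat, Real.norm_eq_abs, sq_abs,
    div_le_div_iff₀ (by positivity) (by norm_num)]
  calc ‖(n : ℂ) ^ 2 - α ^ 2‖ * ‖(n : ℂ) ^ 2 - β ^ 2‖ * ‖(n : ℂ) ^ 2 - γ ^ 2‖ * 16
      ≤ (n ^ 2 + ‖α‖ ^ 2) * (n ^ 2 + ‖β‖ ^ 2) * (n ^ 2 + ‖γ‖ ^ 2) * 16 := by
        gcongr <;> exact hfactor _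
    _ ≤ (n ^ 2) ^ 2 * (n ^ 2 + (1 + ‖α‖ ^ 2) * (1 + ‖β‖ ^ 2) * (1 + ‖γ‖ ^ 2)) * 16 := by
        exact mul_le_mul_of_nonneg_right (add_mul_add_mul_add_le hn1 (sq_nonneg _) (sq_nonneg _)
          (sq_nonneg _)) (by norm_num)
    _ = _ := by ring

lemma le_norm_partialDen (α β γ x : ℂ) (m : ℕ) :
    (x ^ 2).re + 2 * (m + 1) ^ 2 - ‖α * β + β * γ + γ * α‖ - ‖α * β * γ‖ ≤
      ‖partialDen α β γ x (m + 1)‖ := by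
  set e₂ := α * β + β * γ + γ * α
  set e₃ := α * β * γ
  set w := e₂ / (2 : ℕ) - e₃ / (2 * (2 * m + 1) * (2 * m + 3) : ℕ)
  have hw : ‖w‖ ≤ ‖e₂‖ + ‖e₃‖ :=
    norm_sub_le_of_le (norm_div_natCast_le _ _) (norm_div_natCast_le _ _)
  have hden : partialDen α β γ x (m + 1) = x ^ 2 + (2 * (m + 1) ^ 2 : ℝ) + w := by
    simp only [partialDen, partialShift, m.succ_ne_zero, if_false, w, e₂, e₃]
    push_cast
    ring_nf
  have hre := Complex.re_le_norm (partialDen α β γ x (m + 1))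
  have hwre := (abs_le.1 (Complex.abs_re_le_norm w)).1
  rw [hden, Complex.add_re, Complex.add_re, Complex.ofReal_re] at hre
  rw [hden]
  linarith

lemma norm_partialNum_le_mul (hx : 1 / 2 + (1 + ‖α‖ ^ 2) * (1 + ‖β‖ ^ 2) * (1 + ‖γ‖ ^ 2) / 4 +
      ‖α * β + β * γ + γ * α‖ + ‖α * β * γ‖ ≤ (x ^ 2).re) (m : ℕ) :
    ‖partialNum α β γ (m + 1)‖ ≤ (2 * m + 1) ^ 2 / 4 *
      (‖partialDen α β γ x (m + 1)‖ - (2 * ((m + 1 : ℕ) : ℝ) + 1) ^ 2 / 4) := by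
  set C := (1 + ‖α‖ ^ 2) * (1 + ‖β‖ ^ 2) * (1 + ‖γ‖ ^ 2)
  have hden := le_norm_partialDen α β γ x m
  calc ‖partialNum α β γ (m + 1)‖ ≤ (2 * m + 1) ^ 2 * ((2 * m + 1) ^ 2 + C) / 16 :=
        norm_partialNum_le α β γ m
    _ = (2 * m + 1) ^ 2 / 4 * (2 * (m + 1) ^ 2 + 1 / 2 + C / 4 -
        (2 * ((m + 1 : ℕ) : ℝ) + 1) ^ 2 / 4) := by push_cast; ring
    _ ≤ _ := by gcongr; linarith

lemma tendsto_re_add_two_mul_sq_atTop (hx : 0 < x.re) :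
    Tendsto (fun k : ℕ => ((x + 2 * k) ^ 2).re) atTop atTop := by
  refine tendsto_atTop_mono (f := fun k : ℕ => (k : ℝ) + -x.im ^ 2) (fun k => ?_)
    (tendsto_atTop_add_const_right _ _ tendsto_natCast_atTop_atTop)
  have hk : (k : ℝ) ≤ k ^ 2 := by exact_mod_cast Nat.le_self_pow two_ne_zero k
  have hre : ((x + 2 * k) ^ 2).re = (x.re + 2 * k) ^ 2 - x.im ^ 2 := by
    simp [sq, Complex.mul_re]
  rw [hre]
  nlinarith [mul_nonneg hx.le (k.cast_nonneg (α := ℝ))]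

end Dominance

section GammaQuotient

variable {α β γ x u v : ℂ}

lemma tendsto_partialDen_zero_div_sq (α β γ x : ℂ) :
    Tendsto (fun n : ℕ => partialDen α β γ (x + 2 * (n + 1 : ℕ)) 0 / (n : ℂ) ^ 2) atTop
      (nhds 2) := by
  set c := partialShift α β γ 0
  have hlim : Tendsto (fun n : ℕ => ((2 + (x + 2) * (n : ℂ)⁻¹) ^ 2 + c * (n : ℂ)⁻¹ ^ 2) / 2)
      atTop (nhds 2) := by
    have hcont : Continuous fun t : ℂ => ((2 + (x + 2) * t) ^ 2 + c * t ^ 2) / 2 := by fun_prop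
    convert (hcont.tendsto 0).comp (tendsto_inv_atTop_nhds_zero_nat (𝕜 := ℂ)) using 2
    · rfl
    · norm_num
  refine hlim.congr' ?_
  filter_upwards [eventually_ne_atTop 0] with n hn
  have hn' : (n : ℂ) ≠ 0 := Nat.cast_ne_zero.2 hn
  simp only [partialDen, if_true, Nat.cast_succ]
  field_simp
  ring

lemma two_mul_add_one_ne_zero (hx : 0 < x.re) (j : ℕ) : 2 * (x + 2 * j + 1) ≠ 0 := by
  refine mul_ne_zero two_ne_zero ?_
  convert natCast_add_ne_zero hx (2 * j + 1) using 1
  push_cast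
  ring

lemma bauerMuirConst_add_two_mul_ne_zero (h : α + β + γ = 1) (hx : 0 < x.re)
    (hα : ∀ n : ℕ, (x + α) / 2 ≠ -n) (hβ : ∀ n : ℕ, (x + β) / 2 ≠ -n)
    (hγ : ∀ n : ℕ, (x + γ) / 2 ≠ -n) (j : ℕ) : bauerMuirConst α β γ (x + 2 * j) ≠ 0 := by
  rw [bauerMuirConst_add_two_mul h]
  exact mul_ne_zero (two_mul_add_one_ne_zero hx j) (mul_ne_zero (mul_ne_zero
    (mt eq_neg_of_add_eq_zero_left (hα j)) (mt eq_neg_of_add_eq_zero_left (hβ j)))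
    (mt eq_neg_of_add_eq_zero_left (hγ j)))

lemma bauerMuirConst_neg_add_two_mul_ne_zero (h : α + β + γ = 1) (hx : 0 < x.re)
    (hα : ∀ n : ℕ, (x - α + 2) / 2 ≠ -n) (hβ : ∀ n : ℕ, (x - β + 2) / 2 ≠ -n)
    (hγ : ∀ n : ℕ, (x - γ + 2) / 2 ≠ -n) (j : ℕ) :
    bauerMuirConst (-α) (-β) (-γ) (x + 2 * j + 1) ≠ 0 := by
  rw [bauerMuirConst_neg_add_two_mul h]
  exact mul_ne_zero (two_mul_add_one_ne_zero hx j) (mul_ne_zero (mul_ne_zero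
    (mt eq_neg_of_add_eq_zero_left (hα j)) (mt eq_neg_of_add_eq_zero_left (hβ j)))
    (mt eq_neg_of_add_eq_zero_left (hγ j)))

lemma tendsto_prod_bauerMuirConst_div_sq (h : α + β + γ = 1) (hx : 0 < x.re)
    (hα : ∀ n : ℕ, (x - α + 2) / 2 ≠ -n) (hβ : ∀ n : ℕ, (x - β + 2) / 2 ≠ -n)
    (hγ : ∀ n : ℕ, (x - γ + 2) / 2 ≠ -n) :
    Tendsto (fun n : ℕ => (∏ j ∈ Finset.range (n + 1),
        bauerMuirConst (-α) (-β) (-γ) (x + 2 * j + 1) / bauerMuirConst α β γ (x + 2 * j)) /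
          (n : ℂ) ^ 2) atTop
      (nhds (Complex.Gamma ((x + α) / 2) * Complex.Gamma ((x + β) / 2) *
          Complex.Gamma ((x + γ) / 2) / (Complex.Gamma ((x - α + 2) / 2) *
          Complex.Gamma ((x - β + 2) / 2) * Complex.Gamma ((x - γ + 2) / 2)))) := by
  have hsum : (x + α) / 2 + (x + β) / 2 + (x + γ) / 2 + 2 =
      (x - α + 2) / 2 + (x - β + 2) / 2 + (x - γ + 2) / 2 := by linear_combination h
  refine (tendsto_prod_three_div_sq hα hβ hγ hsum).congr fun n => ?_
  congr 1
  refine Finset.prod_congr rfl fun j _ => ?_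
  rw [bauerMuirConst_add_two_mul h, bauerMuirConst_neg_add_two_mul h,
    mul_div_mul_left _ _ (two_mul_add_one_ne_zero hx j), div_mul_div_comm, div_mul_div_comm]

namespace HasScaledLimits

lemma eventually_norm_sub_le (h : (α + β + γ) ^ 2 = 1) (hx : 0 < x.re)
    (hlam : ∀ j : ℕ, bauerMuirConst α β γ (x + 2 * j) ≠ 0)
    (hlam' : ∀ j : ℕ, bauerMuirConst (-α) (-β) (-γ) (x + 2 * j + 1) ≠ 0)
    (huv : HasScaledLimits (partialNum α β γ) (partialDen α β γ x) x u v) :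
    ∀ᶠ k : ℕ in atTop,
      ‖(∏ j ∈ Finset.range k, bauerMuirConst (-α) (-β) (-γ) (x + 2 * j + 1) /
          bauerMuirConst α β γ (x + 2 * j)) * u - partialDen α β γ (x + 2 * k) 0 * v‖ ≤
        1 / 4 * ‖v‖ := by
  filter_upwards [(tendsto_re_add_two_mul_sq_atTop hx).eventually_ge_atTop _] with k hk
  have hbound := (huv.add_two_mul h hx hlam hlam' k).norm_sub_le
    (g := fun m => (2 * m + 1) ^ 2 / 4) (fun m => by positivity) (norm_partialNum_le_mul hk)
  set P := ∏ j ∈ Finset.range k, bauerMuirConst α β γ (x + 2 * j)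
  set Q := ∏ j ∈ Finset.range k, bauerMuirConst (-α) (-β) (-γ) (x + 2 * j + 1)
  set D := partialDen α β γ (x + 2 * k) 0
  have hprod : ∏ j ∈ Finset.range k, bauerMuirConst (-α) (-β) (-γ) (x + 2 * j + 1) /
      bauerMuirConst α β γ (x + 2 * j) = Q / P := Finset.prod_div_distrib _ _
  have hQ : Q ≠ 0 := Finset.prod_ne_zero_iff.2 fun j _ => hlam' j
  rw [hprod]
  calc ‖Q / P * u - D * v‖ = ‖Q‖ * ‖u / P - D * (v / Q)‖ := by
        rw [← norm_mul]
        congr 1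
        field_simp
    _ ≤ ‖Q‖ * (1 / 4 * ‖v / Q‖) := by
        gcongr
        simpa using hbound
    _ = 1 / 4 * ‖v‖ := by
        rw [norm_div]
        field_simp

theorem Gamma_mul_eq_two_mul (h : α + β + γ = 1) (hx : 0 < x.re)
    (hα : ∀ n : ℕ, (x + α) / 2 ≠ -n) (hβ : ∀ n : ℕ, (x + β) / 2 ≠ -n)
    (hγ : ∀ n : ℕ, (x + γ) / 2 ≠ -n) (hα' : ∀ n : ℕ, (x - α + 2) / 2 ≠ -n)
    (hβ' : ∀ n : ℕ, (x - β + 2) / 2 ≠ -n) (hγ' : ∀ n : ℕ, (x - γ + 2) / 2 ≠ -n)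
    (huv : HasScaledLimits (partialNum α β γ) (partialDen α β γ x) x u v) :
    Complex.Gamma ((x + α) / 2) * Complex.Gamma ((x + β) / 2) * Complex.Gamma ((x + γ) / 2) /
      (Complex.Gamma ((x - α + 2) / 2) * Complex.Gamma ((x - β + 2) / 2) *
        Complex.Gamma ((x - γ + 2) / 2)) * u = 2 * v := by
  have hbound := (tendsto_add_atTop_nat 1).eventually <|
    huv.eventually_norm_sub_le (by rw [h, one_pow]) hx
      (bauerMuirConst_add_two_mul_ne_zero h hx hα hβ hγ)
      (bauerMuirConst_neg_add_two_mul_ne_zero h hx hα' hβ' hγ')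
  have hlim := ((tendsto_prod_bauerMuirConst_div_sq h hx hα' hβ' hγ').mul_const u).sub
    ((tendsto_partialDen_zero_div_sq α β γ x).mul_const v)
  have hzero : Tendsto (fun n : ℕ => 1 / 4 * ‖v‖ / (n : ℝ) ^ 2) atTop (nhds 0) :=
    tendsto_const_nhds.div_atTop
      ((tendsto_pow_atTop two_ne_zero).comp tendsto_natCast_atTop_atTop)
  refine sub_eq_zero.1 (tendsto_nhds_unique hlim (squeeze_zero_norm' ?_ hzero))
  filter_upwards [hbound] with n hn
  rw [div_mul_eq_mul_div, div_mul_eq_mul_div, ← sub_div, norm_div, norm_pow,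
    Complex.norm_natCast]
  gcongr

end HasScaledLimits

theorem exists_cfConvergesTo_Gamma_eq (h : α + β + γ = 1)
    (ha : ∀ m, partialNum α β γ (m + 1) ≠ 0) (hx : 0 < x.re)
    (hα : ∀ n : ℕ, (x + α) / 2 ≠ -n) (hβ : ∀ n : ℕ, (x + β) / 2 ≠ -n)
    (hγ : ∀ n : ℕ, (x + γ) / 2 ≠ -n) (hα' : ∀ n : ℕ, (x - α + 2) / 2 ≠ -n)
    (hβ' : ∀ n : ℕ, (x - β + 2) / 2 ≠ -n) (hγ' : ∀ n : ℕ, (x - γ + 2) / 2 ≠ -n) :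
    ∃ w : ℂ, w ≠ 0 ∧ CFConvergesTo (partialNum α β γ) (partialDen α β γ x) w ∧
      Complex.Gamma ((x + α) / 2) * Complex.Gamma ((x + β) / 2) * Complex.Gamma ((x + γ) / 2) /
        (Complex.Gamma ((x - α + 2) / 2) * Complex.Gamma ((x - β + 2) / 2) *
          Complex.Gamma ((x - γ + 2) / 2)) = 2 / w := by
  obtain ⟨u, v, huv, huv0⟩ := exists_hasScaledLimits_partialNum (by rw [h, one_pow]) ha hx
  have hG := huv.Gamma_mul_eq_two_mul h hx hα hβ hγ hα' hβ' hγ'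
  have hG0 : Complex.Gamma ((x + α) / 2) * Complex.Gamma ((x + β) / 2) *
      Complex.Gamma ((x + γ) / 2) / (Complex.Gamma ((x - α + 2) / 2) *
        Complex.Gamma ((x - β + 2) / 2) * Complex.Gamma ((x - γ + 2) / 2)) ≠ 0 := by
    simp only [ne_eq, div_eq_zero_iff, mul_eq_zero, Complex.Gamma_ne_zero, hα, hβ, hγ, hα', hβ',
      hγ', not_false_eq_true, implies_true, or_self]
  have huv_iff : u = 0 ↔ v = 0 := by simpa [hG0] using congrArg (· = 0) hG
  have hu : u ≠ 0 := fun hu => huv0.elim (· hu) (· (huv_iff.1 hu))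
  have hv : v ≠ 0 := mt huv_iff.2 hu
  refine ⟨u / v, div_ne_zero hu hv, huv.cfConvergesTo hx hv, ?_⟩
  rw [div_div_eq_mul_div, eq_div_iff hu, hG]

end GammaQuotient

lemma partialNum_ne_zero {α β γ : ℂ} (hα : ‖α‖ < 1) (hβ : ‖β‖ < 1) (hγ : ‖γ‖ < 1) (m : ℕ) :
    partialNum α β γ (m + 1) ≠ 0 := by
  have hodd : 1 ≤ ‖2 * ((m + 1 : ℕ) : ℂ) - 1‖ := by
    rw [show 2 * ((m + 1 : ℕ) : ℂ) - 1 = ((2 * m + 1 : ℕ) : ℂ) by push_cast; ring,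
      Complex.norm_natCast]
    exact_mod_cast Nat.le_add_left 1 (2 * m)
  have hodd0 : 2 * ((m + 1 : ℕ) : ℂ) - 1 ≠ 0 := norm_pos_iff.1 (one_pos.trans_le hodd)
  have hsub {z : ℂ} (hz : ‖z‖ < 1) : (2 * ((m + 1 : ℕ) : ℂ) - 1) ^ 2 - z ^ 2 ≠ 0 := by
    rw [sub_ne_zero]
    refine fun heq => (hz.trans_le hodd).ne ?_
    rcases sq_eq_sq_iff_eq_or_eq_neg.1 heq with heq | heq
    · rw [heq]
    · rw [heq, norm_neg]
  exact div_ne_zero (neg_ne_zero.2 (mul_ne_zero (mul_ne_zero (hsub hα) (hsub hβ)) (hsub hγ)))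
    (mul_ne_zero (by norm_num) (pow_ne_zero 2 hodd0))

lemma partialNum_ofReal_ne_zero {α β : ℝ} (hα0 : 0 < α) (hα1 : α < 1) (hβ0 : 0 < β)
    (hβ1 : β < 1) (m : ℕ) : partialNum α (1 - α - β) β (m + 1) ≠ 0 := by
  have hnorm {t : ℝ} (ht : -1 < t) (ht' : t < 1) : ‖(t : ℂ)‖ < 1 := by
    rw [Complex.norm_real]
    exact abs_lt.2 ⟨ht, ht'⟩
  exact_mod_cast partialNum_ne_zero (hnorm (by linarith) hα1)
    (hnorm (t := 1 - α - β) (by linarith) (by linarith)) (hnorm (by linarith) hβ1) m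

lemma aSeq_eq_partialNum (α β : ℝ) : aSeq α β = partialNum α (1 - α - β) β := by
  funext m
  simp only [aSeq, partialNum]
  ring

lemma bSeq_eq_partialDen (α β : ℝ) (x : ℂ) : bSeq α β x = partialDen α (1 - α - β) β x := by
  funext m
  have hq : qSeq α β m = partialShift α (1 - α - β) β m := by
    simp only [qSeq, partialShift]
    ring
  rcases eq_or_ne m 0 with rfl | hm
  · simp only [bSeq, partialDen, if_true, hq]
  · simp only [bSeq, partialDen, if_neg hm, hq]

theorem stmt3_general {α β : ℂ} (ha : ∀ m, partialNum α (1 - α - β) β (m + 1) ≠ 0)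
    {x : ℂ} (hx : 0 < x.re)
    (h1 : ∀ n : ℕ, (x + α) / 2 ≠ -(n : ℂ))
    (h2 : ∀ n : ℕ, (x - α - β + 1) / 2 ≠ -(n : ℂ))
    (h3 : ∀ n : ℕ, (x + β) / 2 ≠ -(n : ℂ))
    (h4 : ∀ n : ℕ, (x - α + 2) / 2 ≠ -(n : ℂ))
    (h5 : ∀ n : ℕ, (x + α + β + 1) / 2 ≠ -(n : ℂ))
    (h6 : ∀ n : ℕ, (x - β + 2) / 2 ≠ -(n : ℂ)) :
    ∃ v : ℂ, v ≠ 0 ∧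
      CFConvergesTo (partialNum α (1 - α - β) β) (partialDen α (1 - α - β) β x) v ∧
      Complex.Gamma ((x + α) / 2) * Complex.Gamma ((x - α - β + 1) / 2) *
          Complex.Gamma ((x + β) / 2) /
        (Complex.Gamma ((x - α + 2) / 2) * Complex.Gamma ((x + α + β + 1) / 2) *
          Complex.Gamma ((x - β + 2) / 2)) = 2 / v := by
  rw [show x - α - β + 1 = x + (1 - α - β) by ring] at h2 ⊢
  rw [show x + α + β + 1 = x - (1 - α - β) + 2 by ring] at h5 ⊢
  exact exists_cfConvergesTo_Gamma_eq (by ring) ha hx h1 h2 h3 h4 h5 h6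

theorem stmt3 (α β : ℝ) (hα0 : 0 < α) (hα1 : α < 1) (hβ0 : 0 < β) (hβ1 : β < 1)
    (x : ℂ) (hx : 0 < x.re)
    (h1 : ∀ n : ℕ, (x + α) / 2 ≠ -(n : ℂ))
    (h2 : ∀ n : ℕ, (x - α - β + 1) / 2 ≠ -(n : ℂ))
    (h3 : ∀ n : ℕ, (x + β) / 2 ≠ -(n : ℂ))
    (h4 : ∀ n : ℕ, (x - α + 2) / 2 ≠ -(n : ℂ))
    (h5 : ∀ n : ℕ, (x + α + β + 1) / 2 ≠ -(n : ℂ))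
    (h6 : ∀ n : ℕ, (x - β + 2) / 2 ≠ -(n : ℂ)) :
    ∃ v : ℂ, v ≠ 0 ∧ CFConvergesTo (aSeq α β) (bSeq α β x) v ∧
      Complex.Gamma ((x + α) / 2) * Complex.Gamma ((x - α - β + 1) / 2) *
          Complex.Gamma ((x + β) / 2) /
        (Complex.Gamma ((x - α + 2) / 2) * Complex.Gamma ((x + α + β + 1) / 2) *
          Complex.Gamma ((x - β + 2) / 2)) = 2 / v := by
  rw [aSeq_eq_partialNum, bSeq_eq_partialDen]
  exact stmt3_general (partialNum_ofReal_ne_zero hα0 hα1 hβ0 hβ1) hx h1 h2 h3 h4 h5 h6
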